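/- arXiv:2302.13657 — 8 statements merged into one kernel-verified Lean document; each statement's English description precedes it below -/
import Mathlib

section
/- Let S be a σ-symbol and t_Q an S-term. For every σ-structure Q that is homomorphically equivalent to T(t_Q), the structure D(t_Q) is a dual of Q; that is, for every σ-structure A, there is a homomorphism A → D(t_Q) if and only if there is no homomorphism Q → A. -/
/-!
A vertex `a` of `A` *satisfies* a V-term `t` when `T(t)` maps to `A` with root sent to `a`; this
has a recursive description `Sat` along the term (`sat_iff_hom`), and likewise `T(edge_S(ts)) → A`
holds iff some tuple of `S^A` satisfies `ts` coordinatewise (`homEx_edge_iff`).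

If the tree of `t_Q` does not map to `A`, then sending `a` to the tuple recording which V-subterms
of `t_Q` it satisfies is a homomorphism to `D(t_Q)`: (D1) is the recursive clause of `Sat`, and
(D2) is the absence of a homomorphism. Conversely, in `D(t_Q)` a vertex `v` satisfying a
V-subterm `t` has `v_t = true`, by induction on `t` using (D1) (`bext_of_sat`); hence a
homomorphism from the tree of `t_Q` to `D(t_Q)` would yield a tuple violating (D2).
-/

/-- A relational signature: a type of relation symbols, each with a positive arity. -/
structure Signature : Type 1 where
  symb : Type
  ar : symb → ℕ
  ar_pos : ∀ R, 0 < ar R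

/-- A relational structure over the signature `σ`. -/
structure Struct (σ : Signature) : Type 1 where
  dom : Type
  rel : ∀ R : σ.symb, Set (Fin (σ.ar R) → dom)

variable {σ τ υ : Signature}

/-- `f` is a homomorphism of `σ`-structures from `A` to `B`. -/
def IsHom (A B : Struct σ) (f : A.dom → B.dom) : Prop :=
  ∀ R : σ.symb, ∀ x ∈ A.rel R, (fun i => f (x i)) ∈ B.rel R

/-- `A → B`: there exists a homomorphism from `A` to `B`. -/
def HomEx (A B : Struct σ) : Prop := ∃ f, IsHom A B f

/-- Terms over `σ` whose denotation is a tree rooted in a vertex: `vertex` is a V-term, and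
`pr R i ts` denotes the V-term `pr_i(edge_R(ts))`.  (An R-term `edge_R(t_1, …, t_k)` is
represented by the symbol `R` together with the tuple `ts` of V-terms.) -/
inductive VTerm (σ : Signature) : Type
  | vertex : VTerm σ
  | pr (R : σ.symb) (i : Fin (σ.ar R)) (ts : Fin (σ.ar R) → VTerm σ) : VTerm σ

/-- The domain of the tree denoted by a V-term. -/
def VTerm.domType : VTerm σ → Type
  | .vertex => PUnit
  | .pr R _ ts => (i : Fin (σ.ar R)) × (ts i).domType

/-- The root of the tree denoted by a V-term. -/
def VTerm.root : (t : VTerm σ) → t.domType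
  | .vertex => PUnit.unit
  | .pr _ i ts => ⟨i, (ts i).root⟩

/-- The domain of the tree denoted by the R-term `edge_R(ts)`: the disjoint union of the
domains of the subtrees. -/
def edgeDom (R : σ.symb) (ts : Fin (σ.ar R) → VTerm σ) : Type :=
  (i : Fin (σ.ar R)) × (ts i).domType

/-- The root edge of the tree denoted by the R-term `edge_R(ts)`. -/
def edgeRoot (R : σ.symb) (ts : Fin (σ.ar R) → VTerm σ) : Fin (σ.ar R) → edgeDom R ts :=
  fun i => ⟨i, (ts i).root⟩

/-- The relations of the tree denoted by a V-term: the relations of the disjoint subtrees,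
together with the root edge. -/
def VTerm.rel : (t : VTerm σ) → ∀ S : σ.symb, Set (Fin (σ.ar S) → t.domType)
  | .vertex, _ => ∅
  | .pr R _ ts, S =>
      {x | ∃ i : Fin (σ.ar R), ∃ y ∈ (ts i).rel S, x = fun j => ⟨i, y j⟩} ∪
      {x | ∃ h : R = S, x = fun j => edgeRoot R ts (Fin.cast (congrArg σ.ar h.symm) j)}

/-- The tree `T(t)` denoted by a V-term `t`. -/
def VTerm.tree (t : VTerm σ) : Struct σ := ⟨t.domType, t.rel⟩

/-- The tree `T(t)` denoted by the R-term `t = edge_R(ts)`. -/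
def ETerm.tree (R : σ.symb) (ts : Fin (σ.ar R) → VTerm σ) : Struct σ where
  dom := edgeDom R ts
  rel S :=
    {x | ∃ i : Fin (σ.ar R), ∃ y ∈ (ts i).rel S, x = fun j => ⟨i, y j⟩} ∪
    {x | ∃ h : R = S, x = fun j => edgeRoot R ts (Fin.cast (congrArg σ.ar h.symm) j)}

/-- The V-subterms of a V-term. -/
def VTerm.vsub : VTerm σ → Set (VTerm σ)
  | .vertex => {.vertex}
  | .pr R i ts => insert (.pr R i ts) (⋃ j, (ts j).vsub)

/-- The S-subterms of a V-term, for each `σ`-symbol `S` (an S-term `edge_S(us)` being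
represented by the tuple `us`). -/
def VTerm.esub : VTerm σ → ∀ S : σ.symb, Set (Fin (σ.ar S) → VTerm σ)
  | .vertex, _ => ∅
  | .pr R _ ts, S =>
      {us | ∃ h : R = S, us = fun j => ts (Fin.cast (congrArg σ.ar h.symm) j)} ∪
      {us | ∃ j, us ∈ (ts j).esub S}

/-- A term is either a V-term or an R-term `edge_R(ts)` for some symbol `R`. -/
def Term (σ : Signature) : Type := VTerm σ ⊕ (Σ S : σ.symb, Fin (σ.ar S) → VTerm σ)

/-- The tree denoted by a term. -/
def Term.tree : Term σ → Struct σ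
  | .inl t => t.tree
  | .inr ⟨S, ts⟩ => ETerm.tree S ts

/-- The V-subterms of a term. -/
def Term.vsub : Term σ → Set (VTerm σ)
  | .inl t => t.vsub
  | .inr ⟨_, ts⟩ => ⋃ j, (ts j).vsub

/-- The S-subterms of a term. -/
def Term.esub : Term σ → ∀ S : σ.symb, Set (Fin (σ.ar S) → VTerm σ)
  | .inl t => t.esub
  | .inr ⟨R, ts⟩ => fun S =>
      {us | ∃ h : R = S, us = fun j => ts (Fin.cast (congrArg σ.ar h.symm) j)} ∪
      {us | ∃ j, us ∈ (ts j).esub S}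

/-- Tuples of booleans indexed by the V-terms in `TV` whose entry at `vertex` is `true`. -/
def BDom (TV : Set (VTerm σ)) : Type :=
  {v : {t : VTerm σ // t ∈ TV} → Bool // ∀ h : VTerm.vertex ∈ TV, v ⟨.vertex, h⟩ = true}

open Classical in
/-- The entry of `v` at the V-term `t` (by convention `false` if `t ∉ TV`). -/
noncomputable def bext (TV : Set (VTerm σ)) (v : BDom TV) (t : VTerm σ) : Bool :=
  if h : t ∈ TV then v.1 ⟨t, h⟩ else false

/-- `&ₜ(vs) = (vs 1)_{us 1} ∧ ⋯ ∧ (vs k)_{us k}` for the R-term `t = edge_R(us)`. -/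
def andT (TV : Set (VTerm σ)) {R : σ.symb} (us : Fin (σ.ar R) → VTerm σ)
    (vs : Fin (σ.ar R) → BDom TV) : Prop :=
  ∀ j, bext TV (vs j) (us j) = true

/-- The dual structure `D(t_Q)` of the S-term `t_Q = edge_S(tsQ)`. -/
noncomputable def Dual (S : σ.symb) (tsQ : Fin (σ.ar S) → VTerm σ) : Struct σ where
  dom := BDom (Term.vsub (σ := σ) (.inr ⟨S, tsQ⟩))
  rel R := {vs |
    (∀ us ∈ Term.esub (σ := σ) (.inr ⟨S, tsQ⟩) R, ∀ i : Fin (σ.ar R),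
        VTerm.pr R i us ∈ Term.vsub (σ := σ) (.inr ⟨S, tsQ⟩) →
        andT _ us vs → bext _ (vs i) (.pr R i us) = true) ∧
    (∀ h : R = S, ¬ andT _ (fun j => tsQ (Fin.cast (congrArg σ.ar h) j)) vs)}

/-- `Sat A t a`: the vertex `a` of `A` satisfies the V-term `t`, i.e. there is a homomorphism
`T(t) → A` sending the root to `a`, expressed by recursion on the term. -/
def Sat (A : Struct σ) : VTerm σ → A.dom → Prop
  | .vertex, _ => True
  | .pr R i ts, a => ∃ x ∈ A.rel R, x i = a ∧ ∀ j, Sat A (ts j) (x j)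

/-- Homomorphisms out of `T(edge_R(ts))`, with prescribed image `x` of the root edge, are families
of homomorphisms out of the `T(ts j)` whose roots are sent to a tuple of `R^A`. -/
theorem edge_hom_iff (A : Struct σ) (R : σ.symb) (ts : Fin (σ.ar R) → VTerm σ)
    (x : Fin (σ.ar R) → A.dom) :
    (∃ f : edgeDom R ts → A.dom, IsHom (ETerm.tree R ts) A f ∧ ∀ j, f (edgeRoot R ts j) = x j) ↔
      x ∈ A.rel R ∧ ∀ j, ∃ f, IsHom (ts j).tree A f ∧ f (ts j).root = x j := by
  constructor
  · rintro ⟨f, hf, hx⟩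
    refine ⟨?_, fun j => ⟨fun y => f ⟨j, y⟩, ?_, hx j⟩⟩
    · have h := hf R (edgeRoot R ts) (Or.inr ⟨rfl, rfl⟩)
      rwa [show (fun j => f (edgeRoot R ts j)) = x from funext hx] at h
    · intro U y hy
      exact hf U (fun k => ⟨j, y k⟩) (Or.inl ⟨j, y, hy, rfl⟩)
  · rintro ⟨hx, h⟩
    choose f hf hr using h
    refine ⟨fun p => f p.1 p.2, ?_, hr⟩
    rintro U y (⟨j, z, hz, rfl⟩ | ⟨rfl, rfl⟩)
    · exact hf j U z hz
    · rw [← show (fun j => f j (ts j).root) = x from funext hr] at hx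
      exact hx

theorem sat_iff_hom (A : Struct σ) (t : VTerm σ) :
    ∀ a, Sat A t a ↔ ∃ f, IsHom t.tree A f ∧ f t.root = a := by
  induction t with
  | vertex =>
    intro a
    exact ⟨fun _ => ⟨fun _ => a, fun _ _ h => h.elim, rfl⟩, fun _ => trivial⟩
  | pr R i ts ih =>
    intro a
    constructor
    · rintro ⟨x, hx, rfl, hs⟩
      obtain ⟨f, hf, hr⟩ := (edge_hom_iff A R ts x).2 ⟨hx, fun j => (ih j _).1 (hs j)⟩
      exact ⟨f, hf, hr i⟩
    · rintro ⟨f, hf, rfl⟩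
      obtain ⟨hx, h⟩ := (edge_hom_iff A R ts fun j => f (edgeRoot R ts j)).1
        ⟨f, hf, fun _ => rfl⟩
      exact ⟨_, hx, rfl, fun j => (ih j _).2 (h j)⟩

theorem homEx_edge_iff (A : Struct σ) (R : σ.symb) (ts : Fin (σ.ar R) → VTerm σ) :
    HomEx (ETerm.tree R ts) A ↔ ∃ x ∈ A.rel R, ∀ j, Sat A (ts j) (x j) := by
  constructor
  · rintro ⟨f, hf⟩
    obtain ⟨hx, h⟩ := (edge_hom_iff A R ts fun j => f (edgeRoot R ts j)).1
      ⟨f, hf, fun _ => rfl⟩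
    exact ⟨_, hx, fun j => (sat_iff_hom A _ _).2 (h j)⟩
  · rintro ⟨x, hx, hs⟩
    obtain ⟨f, hf, -⟩ := (edge_hom_iff A R ts x).2
      ⟨hx, fun j => (sat_iff_hom A _ _).1 (hs j)⟩
    exact ⟨f, hf⟩

theorem HomEx.trans {A B C : Struct σ} (h : HomEx A B) (h' : HomEx B C) : HomEx A C := by
  obtain ⟨f, hf⟩ := h
  obtain ⟨g, hg⟩ := h'
  exact ⟨fun a => g (f a), fun R x hx => hg R _ (hf R x hx)⟩

theorem VTerm.self_mem_vsub (t : VTerm σ) : t ∈ t.vsub := by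
  cases t with
  | vertex => exact rfl
  | pr R i ts => exact Or.inl rfl

theorem VTerm.sub_of_pr_mem (t : VTerm σ) {R : σ.symb} {i : Fin (σ.ar R)}
    {us : Fin (σ.ar R) → VTerm σ} (h : VTerm.pr R i us ∈ t.vsub) :
    us ∈ t.esub R ∧ ∀ j, us j ∈ t.vsub := by
  induction t with
  | vertex => cases h
  | pr R' i' ts ih =>
    rcases h with h | h
    · cases h
      exact ⟨Or.inl ⟨rfl, rfl⟩, fun j => Or.inr (Set.mem_iUnion.2 ⟨j, self_mem_vsub _⟩)⟩
    · obtain ⟨k, hk⟩ := Set.mem_iUnion.1 h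
      obtain ⟨h1, h2⟩ := ih k hk
      exact ⟨Or.inr ⟨k, h1⟩, fun j => Or.inr (Set.mem_iUnion.2 ⟨k, h2 j⟩)⟩

/-- In the dual, satisfying a V-subterm `t` of `t_Q` forces the `t`-entry to be `true`. -/
theorem bext_of_sat (S : σ.symb) (tsQ : Fin (σ.ar S) → VTerm σ) (t : VTerm σ) :
    t ∈ Term.vsub (σ := σ) (.inr ⟨S, tsQ⟩) → ∀ v : (Dual S tsQ).dom, Sat (Dual S tsQ) t v →
      bext (Term.vsub (σ := σ) (.inr ⟨S, tsQ⟩)) v t = true := by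
  induction t with
  | vertex =>
    intro ht v _
    exact (dif_pos ht).trans (v.2 ht)
  | pr R i us ih =>
    rintro ht v ⟨x, hx, rfl, hs⟩
    obtain ⟨k, hk⟩ := Set.mem_iUnion.1 ht
    obtain ⟨h1, h2⟩ := VTerm.sub_of_pr_mem _ hk
    exact hx.1 us (Or.inr ⟨k, h1⟩) i ht fun j =>
      ih j (Set.mem_iUnion.2 ⟨k, h2 j⟩) _ (hs j)

open Classical in
/-- The tuple recording which V-terms of `TV` are satisfied by the vertex `a`. -/
noncomputable def satTuple (A : Struct σ) (TV : Set (VTerm σ)) (a : A.dom) : BDom TV :=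
  ⟨fun t => decide (Sat A t.1 a), fun _ => decide_eq_true trivial⟩

theorem bext_satTuple (A : Struct σ) (TV : Set (VTerm σ)) (a : A.dom) (t : VTerm σ) :
    bext TV (satTuple A TV a) t = true ↔ t ∈ TV ∧ Sat A t a := by
  by_cases h : t ∈ TV <;> simp [bext, satTuple, h]

/-- for every structure `Q` homomorphically equivalent to the tree `T(t_Q)` of an
S-term `t_Q = edge_S(tsQ)`, the structure `D(t_Q)` is a dual of `Q`. -/
theorem dual_of_tree {σ : Signature} (S : σ.symb) (tsQ : Fin (σ.ar S) → VTerm σ)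
    (Q : Struct σ) (h1 : HomEx Q (ETerm.tree S tsQ)) (h2 : HomEx (ETerm.tree S tsQ) Q) :
    ∀ A : Struct σ, HomEx A (Dual S tsQ) ↔ ¬ HomEx Q A := by
  intro A
  constructor
  · intro hA hQ
    obtain ⟨x, hx, hs⟩ := (homEx_edge_iff _ S tsQ).1 ((h2.trans hQ).trans hA)
    exact hx.2 rfl fun j =>
      bext_of_sat S tsQ _ (Set.mem_iUnion.2 ⟨j, VTerm.self_mem_vsub _⟩) _ (hs j)
  · intro hQ
    refine ⟨satTuple A _, fun R x hx => ⟨?_, ?_⟩⟩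
    · intro us _ i hi hand
      exact (bext_satTuple A _ _ _).2
        ⟨hi, x, hx, rfl, fun j => ((bext_satTuple A _ _ _).1 (hand j)).2⟩
    · rintro rfl hand
      exact hQ (h1.trans ((homEx_edge_iff A R tsQ).2
        ⟨x, hx, fun j => ((bext_satTuple A _ _ _).1 (hand j)).2⟩))
end

section
/- Let S be a σ-symbol, t_Q an S-term, and t a subterm of t_Q. Let h : T(t) → D(t_Q) be a homomorphism. If t is a V-term, then h(r_t)_t = true; if t is an R-term for a σ-symbol R, then &_t(h^R(r_t)) = true, where h^R denotes the coordinatewise action of h on R-tuples. -/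
variable {σ τ υ : Signature}

theorem VTerm.mem_vsub_of_mem_esub (t : VTerm σ) {R : σ.symb} {us : Fin (σ.ar R) → VTerm σ}
    (hus : us ∈ t.esub R) (j : Fin (σ.ar R)) : us j ∈ t.vsub := by
  induction t with
  | vertex => exact hus.elim
  | pr R' i ts ih =>
    refine Set.mem_insert_of_mem _ (Set.mem_iUnion.2 ?_)
    rcases hus with ⟨rfl, rfl⟩ | ⟨k, hk⟩
    · exact ⟨j, (ts j).self_mem_vsub⟩
    · exact ⟨k, ih k hk⟩

theorem VTerm.mem_esub_of_pr_mem_vsub (t : VTerm σ) {R : σ.symb} {i : Fin (σ.ar R)}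
    {us : Fin (σ.ar R) → VTerm σ} (ht : VTerm.pr R i us ∈ t.vsub) : us ∈ t.esub R := by
  induction t with
  | vertex => cases ht
  | pr R' i' ts ih =>
    rcases ht with ht | ht
    · cases ht
      exact Or.inl ⟨rfl, rfl⟩
    · obtain ⟨k, hk⟩ := Set.mem_iUnion.1 ht
      exact Or.inr ⟨k, ih k hk⟩

theorem Term.mem_vsub_of_mem_esub {S : σ.symb} {tsQ : Fin (σ.ar S) → VTerm σ} {R : σ.symb}
    {us : Fin (σ.ar R) → VTerm σ} (hus : us ∈ Term.esub (σ := σ) (.inr ⟨S, tsQ⟩) R)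
    (j : Fin (σ.ar R)) : us j ∈ Term.vsub (σ := σ) (.inr ⟨S, tsQ⟩) := by
  refine Set.mem_iUnion.2 ?_
  rcases hus with ⟨rfl, rfl⟩ | ⟨k, hk⟩
  · exact ⟨j, (tsQ j).self_mem_vsub⟩
  · exact ⟨k, (tsQ k).mem_vsub_of_mem_esub hk j⟩

theorem Term.mem_esub_of_pr_mem_vsub {S : σ.symb} {tsQ : Fin (σ.ar S) → VTerm σ} {R : σ.symb}
    {i : Fin (σ.ar R)} {us : Fin (σ.ar R) → VTerm σ}
    (ht : VTerm.pr R i us ∈ Term.vsub (σ := σ) (.inr ⟨S, tsQ⟩)) :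
    us ∈ Term.esub (σ := σ) (.inr ⟨S, tsQ⟩) R := by
  obtain ⟨k, hk⟩ := Set.mem_iUnion.1 ht
  exact Or.inr ⟨k, (tsQ k).mem_esub_of_pr_mem_vsub hk⟩

/-- A homomorphism from `T(edge_R(us))` restricts to each of the subtrees `T(us j)`. -/
theorem IsHom.restrict {R : σ.symb} {us : Fin (σ.ar R) → VTerm σ} {B : Struct σ}
    {h : (ETerm.tree R us).dom → B.dom} (hh : IsHom (ETerm.tree R us) B h) (j : Fin (σ.ar R)) :
    IsHom (us j).tree B (fun x => h ⟨j, x⟩) :=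
  fun P y hy => hh P (fun k => ⟨j, y k⟩) (Or.inl ⟨j, y, hy, rfl⟩)

theorem bext_root_eq_true (S : σ.symb) (tsQ : Fin (σ.ar S) → VTerm σ) (t : VTerm σ)
    (ht : t ∈ Term.vsub (σ := σ) (.inr ⟨S, tsQ⟩))
    (h : (t.tree).dom → (Dual S tsQ).dom) (hh : IsHom t.tree (Dual S tsQ) h) :
    bext (Term.vsub (σ := σ) (.inr ⟨S, tsQ⟩)) (h t.root) t = true := by
  induction t with
  | vertex =>
    exact (dif_pos ht).trans ((h VTerm.vertex.root).2 ht)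
  | pr R i us ih =>
    have hus := Term.mem_esub_of_pr_mem_vsub ht
    -- `T(pr_i(t))` and `T(t)` are definitionally the same structure.
    have hh' : IsHom (ETerm.tree R us) (Dual S tsQ) h := hh
    have hedge := hh' R (edgeRoot R us) (Or.inr ⟨rfl, rfl⟩)
    exact hedge.1 us hus i ht fun j =>
      ih j (Term.mem_vsub_of_mem_esub hus j) (fun x => h ⟨j, x⟩) (hh'.restrict j)

/-- for every subterm `t` of the S-term `t_Q = edge_S(tsQ)` and every homomorphism
`h : T(t) → D(t_Q)`: if `t` is a V-term then `h(r_t)_t = true`, and if `t` is an R-term then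
`&_t(h^R(r_t)) = true`. -/
theorem dual_claim {σ : Signature} (S : σ.symb) (tsQ : Fin (σ.ar S) → VTerm σ) :
    (∀ t : VTerm σ, t ∈ Term.vsub (σ := σ) (.inr ⟨S, tsQ⟩) →
      ∀ h : (t.tree).dom → (Dual S tsQ).dom, IsHom t.tree (Dual S tsQ) h →
        bext (Term.vsub (σ := σ) (.inr ⟨S, tsQ⟩)) (h t.root) t = true) ∧
    (∀ (R : σ.symb) (us : Fin (σ.ar R) → VTerm σ),
      us ∈ Term.esub (σ := σ) (.inr ⟨S, tsQ⟩) R →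
      ∀ h : (ETerm.tree R us).dom → (Dual S tsQ).dom,
        IsHom (ETerm.tree R us) (Dual S tsQ) h →
        andT (Term.vsub (σ := σ) (.inr ⟨S, tsQ⟩)) us (fun j => h (edgeRoot R us j))) := by
  refine ⟨bext_root_eq_true S tsQ, fun R us hus h hh j => ?_⟩
  exact bext_root_eq_true S tsQ (us j) (Term.mem_vsub_of_mem_esub hus j)
    (fun x => h ⟨j, x⟩) (hh.restrict j)
end

section
/- Let q_1,…,q_n be terms over σ, where q_i is an R_i-term for a σ-symbol R_i. Define the σ-structure D(q_1,…,q_n) as follows: with 𝒯 the set of all subterms of the q_i's, 𝒯_V its V-terms and 𝒯_R its R-terms for each σ-symbol R, the domain is all tuples v ∈ {true,false}^{𝒯_V} with v_vertex = true, and (v^1,…,v^k) ∈ R^{D(q_1,…,q_n)} iff (D1) for all t ∈ 𝒯_R and all i with pr_i(t) ∈ 𝒯_V, &_t(v^1,…,v^k) implies v^i_{pr_i(t)}, and (D2') &_{q_j}(v^1,…,v^k) = false for every j with R_j = R. Then for every σ-structure A, exactly one of the following holds: (a) T(q_i) → A for some i ∈ {1,…,n}; (b) A → D(q_1,…,q_n).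 -/
variable {σ τ υ : Signature}

/-- The dual `D(q_1, …, q_n)` of the terms `q_i = edge_{R_i}(qs i)`. -/
noncomputable def DualN {σ : Signature} (n : ℕ) (Rs : Fin n → σ.symb)
    (qs : ∀ i : Fin n, Fin (σ.ar (Rs i)) → VTerm σ) : Struct σ where
  dom := BDom (⋃ i, Term.vsub (σ := σ) (.inr ⟨Rs i, qs i⟩))
  rel R := {vs |
    (∀ us ∈ ⋃ i, Term.esub (σ := σ) (.inr ⟨Rs i, qs i⟩) R, ∀ k : Fin (σ.ar R),
        VTerm.pr R k us ∈ ⋃ i, Term.vsub (σ := σ) (.inr ⟨Rs i, qs i⟩) →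
        andT _ us vs → bext _ (vs k) (.pr R k us) = true) ∧
    (∀ i : Fin n, ∀ h : Rs i = R,
        ¬ andT _ (fun j => qs i (Fin.cast (congrArg σ.ar h.symm) j)) vs)}

/-- The V-term `t` holds at the vertex `a` of `A`: the tree `T(t)` maps homomorphically to `A`
with its root sent to `a`. -/
def HoldsAt (A : Struct σ) (t : VTerm σ) (a : A.dom) : Prop :=
  ∃ f : t.domType → A.dom, IsHom t.tree A f ∧ f t.root = a

theorem holdsAt_vertex (A : Struct σ) (a : A.dom) : HoldsAt A .vertex a :=
  ⟨fun _ => a, fun _ _ hx => hx.elim, rfl⟩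

/-- Homomorphisms from the subtrees whose root values form an `R`-edge of `A` glue to a
homomorphism from `T(edge_R(us))`. -/
theorem glue (A : Struct σ) {R : σ.symb} (us : Fin (σ.ar R) → VTerm σ)
    (x : Fin (σ.ar R) → A.dom) (hx : x ∈ A.rel R) (h : ∀ j, HoldsAt A (us j) (x j)) :
    ∃ f : edgeDom R us → A.dom, IsHom (ETerm.tree R us) A f ∧ ∀ j, f (edgeRoot R us j) = x j := by
  choose g hg hr using h
  refine ⟨fun p => g p.1 p.2, ?_, hr⟩
  rintro S y (⟨i, z, hz, rfl⟩ | ⟨rfl, rfl⟩)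
  · exact hg i S z hz
  · have : (fun j => g j (us j).root) = x := funext hr
    exact this ▸ hx

/-- Consider a structure on `BDom TV` all of whose edges satisfy (D1) for the V-terms in `TV` and
the R-terms in `TE`, and a term `t` whose subterms all lie in `TV` and `TE`. Under any homomorphism
from `T(t)`, the image of the root has entry `true` at `t`. The vertex case is the normalization
`v_vertex = true` of `BDom`. -/
theorem bext_root {TV : Set (VTerm σ)} {TE : ∀ S : σ.symb, Set (Fin (σ.ar S) → VTerm σ)}
    (rel : ∀ R : σ.symb, Set (Fin (σ.ar R) → BDom TV))
    (hD : ∀ R, ∀ vs ∈ rel R, ∀ us ∈ TE R, ∀ k : Fin (σ.ar R), VTerm.pr R k us ∈ TV →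
      andT TV us vs → bext TV (vs k) (.pr R k us) = true)
    (t : VTerm σ) (hV : t.vsub ⊆ TV) (hE : ∀ S, t.esub S ⊆ TE S)
    (f : t.domType → BDom TV) (hf : IsHom t.tree ⟨BDom TV, rel⟩ f) :
    bext TV (f t.root) t = true := by
  induction t with
  | vertex =>
    have h : VTerm.vertex ∈ TV := hV rfl
    rw [bext, dif_pos h]
    exact (f _).2 h
  | pr R i ts ih =>
    refine hD R (fun j => f ⟨j, (ts j).root⟩) (hf R _ (Or.inr ⟨rfl, rfl⟩)) ts
      (hE R (Or.inl ⟨rfl, rfl⟩)) i (hV (Set.mem_insert _ _)) fun j => ?_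
    exact ih j
      (fun u hu => hV (Set.mem_insert_of_mem _ (Set.mem_iUnion.2 ⟨j, hu⟩)))
      (fun S u hu => hE S (Or.inr ⟨j, hu⟩))
      (fun p => f ⟨j, p⟩)
      (fun S y hy => hf S _ (Or.inl ⟨j, y, hy, rfl⟩))

open Classical in
/-- The characteristic tuple of `a`: its entry at `t` says whether `t` holds at `a`. -/
noncomputable def charTuple (A : Struct σ) (TV : Set (VTerm σ)) (a : A.dom) : BDom TV :=
  ⟨fun t => decide (HoldsAt A t.1 a), fun _ => decide_eq_true (holdsAt_vertex A a)⟩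

theorem bext_charTuple (A : Struct σ) (TV : Set (VTerm σ)) (a : A.dom) (t : VTerm σ) :
    bext TV (charTuple A TV a) t = true ↔ t ∈ TV ∧ HoldsAt A t a := by
  by_cases h : t ∈ TV <;> simp [bext, charTuple, h]

/-- for every structure `A`, exactly one of the following holds: some `T(q_i)`
maps homomorphically to `A`, or `A` maps homomorphically to `D(q_1, …, q_n)`. -/
theorem multi_tree_duality {σ : Signature} (n : ℕ) (Rs : Fin n → σ.symb)
    (qs : ∀ i : Fin n, Fin (σ.ar (Rs i)) → VTerm σ) (A : Struct σ) :
    Xor' (∃ i : Fin n, HomEx (ETerm.tree (Rs i) (qs i)) A) (HomEx A (DualN n Rs qs)) := by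
  have not_both {i : Fin n} (h : HomEx (ETerm.tree (Rs i) (qs i)) A) :
      ¬ HomEx A (DualN n Rs qs) := by
    rintro ⟨g, hg⟩
    obtain ⟨f, hf⟩ := h
    have hgf : IsHom (ETerm.tree (Rs i) (qs i)) (DualN n Rs qs) (fun p => g (f p)) :=
      fun S x hx => hg S _ (hf S x hx)
    refine (hgf (Rs i) _ (Or.inr ⟨rfl, rfl⟩)).2 i rfl fun j => ?_
    exact bext_root (TE := fun S => ⋃ i, Term.esub (σ := σ) (.inr ⟨Rs i, qs i⟩) S)
      (DualN n Rs qs).rel (fun R vs hvs => hvs.1) (qs i j)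
      (fun u hu => Set.mem_iUnion.2 ⟨i, Set.mem_iUnion.2 ⟨j, hu⟩⟩)
      (fun S u hu => Set.mem_iUnion.2 ⟨i, Or.inr ⟨j, hu⟩⟩)
      (fun p => g (f ⟨j, p⟩))
      (fun S y hy => hgf S _ (Or.inl ⟨j, y, hy, rfl⟩))
  by_cases h : ∃ i : Fin n, HomEx (ETerm.tree (Rs i) (qs i)) A
  · exact Or.inl ⟨h, h.elim fun _ hi => not_both hi⟩
  · refine Or.inr ⟨⟨charTuple A _, fun R x hx => ⟨?_, ?_⟩⟩, h⟩
    · intro us _ k hk hand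
      obtain ⟨f, hf, hr⟩ := glue A us x hx fun j => ((bext_charTuple A _ _ _).1 (hand j)).2
      -- `T(pr_k(edge_R(us)))` is the same structure as `T(edge_R(us))`, rooted at coordinate `k`.
      exact (bext_charTuple A _ _ _).2 ⟨hk, f, hf, hr k⟩
    · rintro i rfl hand
      obtain ⟨f, hf, -⟩ := glue A (qs i) x hx fun j => ((bext_charTuple A _ _ _).1 (hand j)).2
      exact h ⟨i, f, hf⟩
end

section
/- In the setting of the template with P = V_1 and the construction Ω described in the context: if f : Γ(A) → B is a homomorphism, then the map g : A → Ω(B) defined by g(u)_t = { f ∘ h : h a homomorphism T(t) → A with h(r_t) = u } for each t ∈ 𝒯_V is a well-defined homomorphism A → Ω(B). In particular, if there is a homomorphism Γ(A) → B, then there is a homomorphism A → Ω(B). -/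
variable {σ τ υ : Signature}

/-- The central Pultr functor for the template where `P = V₁` is a single vertex with empty
relations, `Q_R = T(tq R)` and the map `ε_{i,R}` selects the element `x R i` of `Q_R`. -/
def GammaV (tq : τ.symb → Term σ) (x : ∀ R : τ.symb, Fin (τ.ar R) → ((tq R).tree).dom)
    (A : Struct σ) : Struct τ where
  dom := A.dom
  rel R := {y | ∃ r : ((tq R).tree).dom → A.dom, IsHom ((tq R).tree) A r ∧ ∀ i, y i = r (x R i)}

/-- `𝒯_V`: all V-subterms of the chosen terms `t_R`. -/
def TVs (tq : τ.symb → Term σ) : Set (VTerm σ) := ⋃ R, (tq R).vsub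

/-- `𝒯_S`: all S-subterms of the chosen terms `t_R`. -/
def TEs (tq : τ.symb → Term σ) (S : σ.symb) : Set (Fin (σ.ar S) → VTerm σ) := ⋃ R, (tq R).esub S

/-- Domain of `Ω(B)`: tuples of sets of homomorphisms `Γ(T(t)) → B`, indexed by `t ∈ 𝒯_V`,
whose entry at `vertex` is a singleton. -/
def OmVDom (tq : τ.symb → Term σ) (x : ∀ R : τ.symb, Fin (τ.ar R) → ((tq R).tree).dom)
    (B : Struct τ) : Type :=
  {U : (t : {t : VTerm σ // t ∈ TVs tq}) → Set ((t.1.tree).dom → B.dom) //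
    (∀ t, ∀ f ∈ U t, IsHom (GammaV tq x t.1.tree) B f) ∧
    (∀ h : VTerm.vertex ∈ TVs tq, ∃! f, f ∈ U ⟨.vertex, h⟩)}

open Classical in
/-- The entry of `U` at the V-term `t` (by convention `∅` if `t ∉ 𝒯_V`). -/
noncomputable def UextV (tq : τ.symb → Term σ)
    (x : ∀ R : τ.symb, Fin (τ.ar R) → ((tq R).tree).dom)
    (B : Struct τ) (U : OmVDom tq x B) (t : VTerm σ) : Set (t.tree.dom → B.dom) :=
  if h : t ∈ TVs tq then U.1 ⟨t, h⟩ else ∅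

/-- `⨉_t(Us) = {f₁ ∪ ⋯ ∪ f_k : f_i ∈ (Us i)_{ts i}}` for the S-term `t = edge_S(ts)`:
maps on the disjoint union all of whose components lie in the prescribed sets. -/
def timesV (tq : τ.symb → Term σ) (x : ∀ R : τ.symb, Fin (τ.ar R) → ((tq R).tree).dom)
    (B : Struct τ) (S : σ.symb) (ts : Fin (σ.ar S) → VTerm σ)
    (Us : Fin (σ.ar S) → OmVDom tq x B) : Set (edgeDom S ts → B.dom) :=
  {g | ∀ j, (fun z => g ⟨j, z⟩) ∈ UextV tq x B (Us j) (ts j)}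

/-- The right adjoint `Ω` for the template with `P = V₁`. -/
noncomputable def OmegaV (tq : τ.symb → Term σ)
    (x : ∀ R : τ.symb, Fin (τ.ar R) → ((tq R).tree).dom) (B : Struct τ) : Struct σ where
  dom := OmVDom tq x B
  rel S := {Us |
    (∀ ts ∈ TEs tq S, ∀ i : Fin (σ.ar S), VTerm.pr S i ts ∈ TVs tq →
        ∀ g ∈ timesV tq x B S ts Us, g ∈ UextV tq x B (Us i) (.pr S i ts)) ∧
    (∀ ts ∈ TEs tq S, ∀ g ∈ timesV tq x B S ts Us,
        IsHom (GammaV tq x (ETerm.tree S ts)) B g)}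

theorem IsHom.comp_gammaV {tq : τ.symb → Term σ}
    {x : ∀ R : τ.symb, Fin (τ.ar R) → ((tq R).tree).dom} {C A : Struct σ} {B : Struct τ}
    {f : A.dom → B.dom} (hf : IsHom (GammaV tq x A) B f) {h : C.dom → A.dom} (hh : IsHom C A h) :
    IsHom (GammaV tq x C) B (fun z => f (h z)) := by
  rintro R y ⟨r, hr, hy⟩
  refine hf R (fun i => h (y i)) ⟨fun q => h (r q), ?_, fun i => congrArg h (hy i)⟩
  intro S w hw
  exact hh S _ (hr S w hw)

/-- Homomorphisms on the subtrees whose root values form a tuple of `S^A` glue to a homomorphism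
on the tree of the S-term. -/
theorem isHom_glue {A : Struct σ} {S : σ.symb} {ts : Fin (σ.ar S) → VTerm σ}
    {y : Fin (σ.ar S) → A.dom} (hy : y ∈ A.rel S) (h : ∀ j, (ts j).tree.dom → A.dom)
    (hh : ∀ j, IsHom (ts j).tree A (h j)) (hroot : ∀ j, h j (ts j).root = y j) :
    IsHom (ETerm.tree S ts) A (fun z => h z.1 z.2) := by
  rintro R w (⟨i, v, hv, rfl⟩ | ⟨rfl, rfl⟩)
  · exact hh i R v hv
  · have e : (fun j => h j (ts j).root) = y := funext hroot
    rw [← e] at hy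
    exact hy

/-- if `f : Γ(A) → B` is a homomorphism then
`g(u)_t = { f ∘ h : h : T(t) → A a homomorphism with h(r_t) = u }` is a well-defined
homomorphism `g : A → Ω(B)`; in particular `Γ(A) → B` implies `A → Ω(B)`. -/
theorem omegaV_easy_direction {σ τ : Signature} (tq : τ.symb → Term σ)
    (x : ∀ R : τ.symb, Fin (τ.ar R) → ((tq R).tree).dom)
    (A : Struct σ) (B : Struct τ)
    (f : (GammaV tq x A).dom → B.dom) (hf : IsHom (GammaV tq x A) B f) :
    ∃ g : A.dom → (OmegaV tq x B).dom,
      (∀ (u : A.dom) (t : {t : VTerm σ // t ∈ TVs tq}),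
        (g u).1 t = {d | ∃ h : (t.1.tree).dom → A.dom,
            IsHom t.1.tree A h ∧ h t.1.root = u ∧ d = fun z => f (h z)}) ∧
      IsHom A (OmegaV tq x B) g := by
  let g : A.dom → OmVDom tq x B := fun u =>
    ⟨fun t => {d | ∃ h : (t.1.tree).dom → A.dom,
        IsHom t.1.tree A h ∧ h t.1.root = u ∧ d = fun z => f (h z)}, by
      rintro t d ⟨h, hh, -, rfl⟩
      exact hf.comp_gammaV hh, by
      intro _
      refine ⟨fun _ => f u, ⟨fun _ => u, ?_, rfl, rfl⟩, ?_⟩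
      · intro R w hw
        exact hw.elim
      · rintro d ⟨h, -, hu, rfl⟩
        funext z
        exact congrArg f hu⟩
  refine ⟨g, fun _ _ => rfl, ?_⟩
  intro S y hy
  have key : ∀ ts : Fin (σ.ar S) → VTerm σ, ∀ d ∈ timesV tq x B S ts (fun i => g (y i)),
      ∃ h : edgeDom S ts → A.dom, IsHom (ETerm.tree S ts) A h ∧
        (∀ i, h (edgeRoot S ts i) = y i) ∧ d = fun z => f (h z) := by
    intro ts d hd
    have hd' : ∀ j, ∃ h : (ts j).tree.dom → A.dom, IsHom (ts j).tree A h ∧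
        h (ts j).root = y j ∧ (fun z => d ⟨j, z⟩) = fun z => f (h z) := by
      intro j
      have hj := hd j
      unfold UextV at hj
      split_ifs at hj
      · exact hj
      · exact hj.elim
    choose h hh hroot hdh using hd'
    exact ⟨fun z => h z.1 z.2, isHom_glue hy h hh hroot, hroot,
      funext fun ⟨j, z⟩ => congrFun (hdh j) z⟩
  refine ⟨fun ts _ i hi d hd => ?_, fun ts _ d hd => ?_⟩
  · obtain ⟨h, hh, hroot, rfl⟩ := key ts d hd
    unfold UextV
    rw [dif_pos hi]
    -- `T(pr_i(t))` and `T(t)` are the same structure; only the choice of root differs.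
    exact ⟨h, hh, hroot i, rfl⟩
  · obtain ⟨h, hh, -, rfl⟩ := key ts d hd
    exact hf.comp_gammaV hh
end

section
/- In the setting of the template with P = Š_1 and the construction Ω described in the context: if f : Γ(A) → B is a homomorphism, then the map g : A → Ω(B) defined by g(u)_t = { f ∘ h^{Š} : h a homomorphism T(t) → A with h(r_t) = u } for each t ∈ 𝒯_V is a well-defined homomorphism A → Ω(B). In particular, if there is a homomorphism Γ(A) → B, then there is a homomorphism A → Ω(B). -/
variable {σ τ υ : Signature}

/-- The central Pultr functor for the template where `P = Š₁` consists of a single `Š`-edge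
(`Š = Sc`), `Q_R = T(tq R)`, and `ε_{i,R}` selects the `Š`-edge `x R i` of `Q_R`. -/
def GammaE (Sc : σ.symb) (tq : τ.symb → Term σ)
    (x : ∀ R : τ.symb, Fin (τ.ar R) → (Fin (σ.ar Sc) → ((tq R).tree).dom))
    (A : Struct σ) : Struct τ where
  dom := {e : Fin (σ.ar Sc) → A.dom // e ∈ A.rel Sc}
  rel R := {y | ∃ h : ((tq R).tree).dom → A.dom, IsHom ((tq R).tree) A h ∧
      ∀ i, (y i).1 = fun j => h (x R i j)}

/-- Domain of `Ω(B)`: tuples of sets of homomorphisms `Γ(T(t)) → B`, indexed by `t ∈ 𝒯_V`,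
whose entry at `vertex` is `{∅}` (the set containing the empty map, i.e. the full set of maps
from the empty domain of `Γ(T(vertex))`). -/
def OmEDom (Sc : σ.symb) (tq : τ.symb → Term σ)
    (x : ∀ R : τ.symb, Fin (τ.ar R) → (Fin (σ.ar Sc) → ((tq R).tree).dom))
    (B : Struct τ) : Type :=
  {U : (t : {t : VTerm σ // t ∈ TVs tq}) → Set ((GammaE Sc tq x t.1.tree).dom → B.dom) //
    (∀ t, ∀ f ∈ U t, IsHom (GammaE Sc tq x t.1.tree) B f) ∧
    (∀ h : VTerm.vertex ∈ TVs tq, U ⟨.vertex, h⟩ = Set.univ)}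

open Classical in
/-- The entry of `U` at the V-term `t` (by convention `∅` if `t ∉ 𝒯_V`). -/
noncomputable def UextE (Sc : σ.symb) (tq : τ.symb → Term σ)
    (x : ∀ R : τ.symb, Fin (τ.ar R) → (Fin (σ.ar Sc) → ((tq R).tree).dom))
    (B : Struct τ) (U : OmEDom Sc tq x B) (t : VTerm σ) :
    Set ((GammaE Sc tq x t.tree).dom → B.dom) :=
  if h : t ∈ TVs tq then U.1 ⟨t, h⟩ else ∅

/-- Restriction of a map defined on the `Š`-edges of `T(edge_S(ts))` to the `Š`-edges of the
`i`-th subtree. -/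
def restrE (Sc : σ.symb) (tq : τ.symb → Term σ)
    (x : ∀ R : τ.symb, Fin (τ.ar R) → (Fin (σ.ar Sc) → ((tq R).tree).dom))
    (B : Struct τ) (S : σ.symb) (ts : Fin (σ.ar S) → VTerm σ) (i : Fin (σ.ar S))
    (g : (GammaE Sc tq x (ETerm.tree S ts)).dom → B.dom) :
    (GammaE Sc tq x (ts i).tree).dom → B.dom :=
  fun y => g ⟨fun j => ⟨i, y.1 j⟩, Or.inl ⟨i, y.1, y.2, rfl⟩⟩

/-- `⨉_t(Us) = {f₁ ∪ ⋯ ∪ f_k : f_i ∈ (Us i)_{ts i}}` for the S-term `t = edge_S(ts)` with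
`S ≠ Š`: maps on the `Š`-edges of `T(t)` all of whose restrictions lie in the prescribed
sets. -/
def timesNE (Sc : σ.symb) (tq : τ.symb → Term σ)
    (x : ∀ R : τ.symb, Fin (τ.ar R) → (Fin (σ.ar Sc) → ((tq R).tree).dom))
    (B : Struct τ) (S : σ.symb) (ts : Fin (σ.ar S) → VTerm σ)
    (Us : Fin (σ.ar S) → OmEDom Sc tq x B) :
    Set ((GammaE Sc tq x (ETerm.tree S ts)).dom → B.dom) :=
  {g | ∀ i, restrE Sc tq x B S ts i g ∈ UextE Sc tq x B (Us i) (ts i)}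

theorem rootEdgeMem (Sc : σ.symb) (ts : Fin (σ.ar Sc) → VTerm σ) :
    edgeRoot Sc ts ∈ (ETerm.tree Sc ts).rel Sc :=
  Or.inr ⟨rfl, rfl⟩

/-- `⨉_t(Us; e) = {f₁ ∪ ⋯ ∪ f_k ∪ (r_t ↦ e) : f_i ∈ (Us i)_{ts i}}` for the `Š`-term
`t = edge_Š(ts)` with witness `e`. -/
def timesW (Sc : σ.symb) (tq : τ.symb → Term σ)
    (x : ∀ R : τ.symb, Fin (τ.ar R) → (Fin (σ.ar Sc) → ((tq R).tree).dom))
    (B : Struct τ) (ts : Fin (σ.ar Sc) → VTerm σ)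
    (Us : Fin (σ.ar Sc) → OmEDom Sc tq x B) (e : B.dom) :
    Set ((GammaE Sc tq x (ETerm.tree Sc ts)).dom → B.dom) :=
  {g | (∀ i, restrE Sc tq x B Sc ts i g ∈ UextE Sc tq x B (Us i) (ts i)) ∧
       g ⟨edgeRoot Sc ts, rootEdgeMem Sc ts⟩ = e}

/-- `e ∈ B` is a witness for the tuple `Us` of elements of `Ω(B)`: conditions (B1) and (B2). -/
def IsWitness (Sc : σ.symb) (tq : τ.symb → Term σ)
    (x : ∀ R : τ.symb, Fin (τ.ar R) → (Fin (σ.ar Sc) → ((tq R).tree).dom))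
    (B : Struct τ) (Us : Fin (σ.ar Sc) → OmEDom Sc tq x B) (e : B.dom) : Prop :=
  ∀ ts ∈ TEs tq Sc,
    (∀ i : Fin (σ.ar Sc), VTerm.pr Sc i ts ∈ TVs tq →
        ∀ g ∈ timesW Sc tq x B ts Us e, g ∈ UextE Sc tq x B (Us i) (.pr Sc i ts)) ∧
    (∀ g ∈ timesW Sc tq x B ts Us e, IsHom (GammaE Sc tq x (ETerm.tree Sc ts)) B g)

/-- The right adjoint `Ω` for the template with `P = Š₁`. -/
noncomputable def OmegaE (Sc : σ.symb) (tq : τ.symb → Term σ)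
    (x : ∀ R : τ.symb, Fin (τ.ar R) → (Fin (σ.ar Sc) → ((tq R).tree).dom))
    (B : Struct τ) : Struct σ where
  dom := OmEDom Sc tq x B
  rel S := {Us |
    (S ≠ Sc →
      (∀ ts ∈ TEs tq S, ∀ i : Fin (σ.ar S), VTerm.pr S i ts ∈ TVs tq →
          ∀ g ∈ timesNE Sc tq x B S ts Us, g ∈ UextE Sc tq x B (Us i) (.pr S i ts)) ∧
      (∀ ts ∈ TEs tq S, ∀ g ∈ timesNE Sc tq x B S ts Us,
          IsHom (GammaE Sc tq x (ETerm.tree S ts)) B g)) ∧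
    (∀ heq : S = Sc, ∃ e : B.dom,
        IsWitness Sc tq x B (fun j => Us (Fin.cast (congrArg σ.ar heq.symm) j)) e)}

/-- The map `f ∘ h^Š : Γ(A') → B` induced by `f : Γ(A) → B` and a homomorphism `h : A' → A`. -/
def pullE (Sc : σ.symb) (tq : τ.symb → Term σ)
    (x : ∀ R : τ.symb, Fin (τ.ar R) → (Fin (σ.ar Sc) → ((tq R).tree).dom))
    {A A' : Struct σ} {B : Struct τ} (f : (GammaE Sc tq x A).dom → B.dom)
    (h : A'.dom → A.dom) (hh : IsHom A' A h) : (GammaE Sc tq x A').dom → B.dom :=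
  fun y => f ⟨fun j => h (y.1 j), hh Sc y.1 y.2⟩

theorem pullE_isHom (Sc : σ.symb) (tq : τ.symb → Term σ)
    (x : ∀ R : τ.symb, Fin (τ.ar R) → (Fin (σ.ar Sc) → ((tq R).tree).dom))
    {A A' : Struct σ} {B : Struct τ} (f : (GammaE Sc tq x A).dom → B.dom)
    (hf : IsHom (GammaE Sc tq x A) B f)
    (h : A'.dom → A.dom) (hh : IsHom A' A h) :
    IsHom (GammaE Sc tq x A') B (pullE Sc tq x f h hh) := by
  rintro R y ⟨k, hk, hy⟩
  refine hf R (fun i => ⟨fun j => h ((y i).1 j), hh Sc (y i).1 (y i).2⟩)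
    ⟨fun v => h (k v), fun S z hz => hh S _ (hk S z hz), fun i => ?_⟩
  funext j
  exact congrArg h (congrFun (hy i) j)

/-- The set `g(u)_t = {f ∘ h^Š : h : T(t) → A a homomorphism with h(r_t) = u}`. -/
def gSet (Sc : σ.symb) (tq : τ.symb → Term σ)
    (x : ∀ R : τ.symb, Fin (τ.ar R) → (Fin (σ.ar Sc) → ((tq R).tree).dom))
    {A : Struct σ} {B : Struct τ} (f : (GammaE Sc tq x A).dom → B.dom) (u : A.dom)
    (t : VTerm σ) : Set ((GammaE Sc tq x t.tree).dom → B.dom) :=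
  {d | ∃ h : t.tree.dom → A.dom, ∃ hh : IsHom t.tree A h,
    h t.root = u ∧ d = pullE Sc tq x f h hh}

/-- The element `g(u)` of `Ω(B)`. -/
def gMap (Sc : σ.symb) (tq : τ.symb → Term σ)
    (x : ∀ R : τ.symb, Fin (τ.ar R) → (Fin (σ.ar Sc) → ((tq R).tree).dom))
    {A : Struct σ} {B : Struct τ} (f : (GammaE Sc tq x A).dom → B.dom)
    (hf : IsHom (GammaE Sc tq x A) B f) (u : A.dom) : OmEDom Sc tq x B :=
  ⟨fun t => gSet Sc tq x f u t.1, by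
    constructor
    · rintro t _ ⟨h, hh, -, rfl⟩
      exact pullE_isHom Sc tq x f hf h hh
    · intro _
      refine Set.eq_univ_of_forall fun d => ⟨fun _ => u, fun _ _ hz => hz.elim, rfl, ?_⟩
      -- `T(vertex)` has no edges, so all maps on its `Š`-edges agree.
      funext y
      exact y.2.elim⟩

theorem mem_UextE_gMap (Sc : σ.symb) (tq : τ.symb → Term σ)
    (x : ∀ R : τ.symb, Fin (τ.ar R) → (Fin (σ.ar Sc) → ((tq R).tree).dom))
    {A : Struct σ} {B : Struct τ} (f : (GammaE Sc tq x A).dom → B.dom)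
    (hf : IsHom (GammaE Sc tq x A) B f) (u : A.dom) (t : VTerm σ)
    (d : (GammaE Sc tq x t.tree).dom → B.dom) :
    d ∈ UextE Sc tq x B (gMap Sc tq x f hf u) t ↔ t ∈ TVs tq ∧ d ∈ gSet Sc tq x f u t := by
  by_cases ht : t ∈ TVs tq <;> simp [UextE, ht, gMap]

/-- Gluing: if every restriction of `d` to a subtree of `T(edge_S(ts))` is induced by a
homomorphism sending the root of the subtree to the corresponding entry of `u ∈ S^A`, then `d` is
induced by a homomorphism sending the root edge to `u`. If `S = Š`, then `d` must moreover send the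
root edge to `f u`; this is `hroot`, phrased so as to avoid transporting `u` along `S = Š`. -/
theorem exists_glue (Sc : σ.symb) (tq : τ.symb → Term σ)
    (x : ∀ R : τ.symb, Fin (τ.ar R) → (Fin (σ.ar Sc) → ((tq R).tree).dom))
    {A : Struct σ} {B : Struct τ} (f : (GammaE Sc tq x A).dom → B.dom)
    (S : σ.symb) (ts : Fin (σ.ar S) → VTerm σ) (u : Fin (σ.ar S) → A.dom) (hu : u ∈ A.rel S)
    (d : (GammaE Sc tq x (ETerm.tree S ts)).dom → B.dom)
    (hd : ∀ i, restrE Sc tq x B S ts i d ∈ gSet Sc tq x f (u i) (ts i))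
    (hroot : ∀ (heq : S = Sc) (y : (GammaE Sc tq x (ETerm.tree S ts)).dom)
      (a : (GammaE Sc tq x A).dom),
      (y.1 = fun j => edgeRoot S ts (Fin.cast (congrArg σ.ar heq.symm) j)) →
      (a.1 = fun j => u (Fin.cast (congrArg σ.ar heq.symm) j)) → d y = f a) :
    ∃ h : (ETerm.tree S ts).dom → A.dom, ∃ hh : IsHom (ETerm.tree S ts) A h,
      (∀ i, h (edgeRoot S ts i) = u i) ∧ d = pullE Sc tq x f h hh := by
  choose k hk hkr hkd using hd
  have hh : IsHom (ETerm.tree S ts) A (fun v => k v.1 v.2) := by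
    rintro R z (⟨i, y, hy, rfl⟩ | ⟨rfl, rfl⟩)
    · exact hk i R y hy
    · have : (fun j => k j (ts j).root) = u := funext hkr
      exact this ▸ hu
  refine ⟨fun v => k v.1 v.2, hh, hkr, ?_⟩
  funext ⟨y, hy⟩
  rcases id hy with ⟨i, z, hz, rfl⟩ | ⟨heq, hy'⟩
  · exact congrFun (hkd i) ⟨z, hz⟩
  · refine hroot heq _ _ hy' ?_
    subst hy'
    funext j
    exact hkr _

/-- if `f : Γ(A) → B` is a homomorphism then
`g(u)_t = { f ∘ h^{Š} : h : T(t) → A a homomorphism with h(r_t) = u }` is a well-defined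
homomorphism `g : A → Ω(B)`; in particular `Γ(A) → B` implies `A → Ω(B)`. -/
theorem omegaE_easy_direction {σ τ : Signature} (Sc : σ.symb) (tq : τ.symb → Term σ)
    (x : ∀ R : τ.symb, Fin (τ.ar R) → (Fin (σ.ar Sc) → ((tq R).tree).dom))
    (hx : ∀ R i, x R i ∈ ((tq R).tree).rel Sc)
    (A : Struct σ) (B : Struct τ)
    (f : (GammaE Sc tq x A).dom → B.dom) (hf : IsHom (GammaE Sc tq x A) B f) :
    ∃ g : A.dom → (OmegaE Sc tq x B).dom,
      (∀ (u : A.dom) (t : {t : VTerm σ // t ∈ TVs tq}),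
        (g u).1 t = {d | ∃ h : (t.1.tree).dom → A.dom, ∃ hh : IsHom t.1.tree A h,
            h t.1.root = u ∧ d = fun y => f ⟨fun j => h (y.1 j), hh Sc y.1 y.2⟩}) ∧
      IsHom A (OmegaE Sc tq x B) g := by
  refine ⟨gMap Sc tq x f hf, fun u t => rfl, fun S u hu => ⟨fun hne => ?_, fun heq => ?_⟩⟩
  · have key : ∀ ts, ∀ d ∈ timesNE Sc tq x B S ts (fun i => gMap Sc tq x f hf (u i)), _ :=
      fun ts d hd => exists_glue Sc tq x f S ts u hu d
        (fun i => ((mem_UextE_gMap Sc tq x f hf _ _ _).1 (hd i)).2)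
        (fun heq => absurd heq hne)
    constructor
    · intro ts _ i hi d hd
      obtain ⟨h, hh, hr, hdh⟩ := key ts d hd
      exact (mem_UextE_gMap Sc tq x f hf _ _ _).2 ⟨hi, h, hh, hr i, hdh⟩
    · intro ts _ d hd
      obtain ⟨h, hh, -, rfl⟩ := key ts d hd
      exact pullE_isHom Sc tq x f hf h hh
  · subst heq
    refine ⟨f ⟨u, hu⟩, fun ts _ => ?_⟩
    have key : ∀ d ∈ timesW S tq x B ts (fun i => gMap S tq x f hf (u i)) (f ⟨u, hu⟩), _ :=
      fun d hd => exists_glue S tq x f S ts u hu d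
        (fun i => ((mem_UextE_gMap S tq x f hf _ _ _).1 (hd.1 i)).2)
        (fun _ y a hy ha => by
          obtain rfl : y = ⟨edgeRoot S ts, rootEdgeMem S ts⟩ := Subtype.ext hy
          obtain rfl : a = ⟨u, hu⟩ := Subtype.ext ha
          exact hd.2)
    constructor
    · intro i hi d hd
      obtain ⟨h, hh, hr, hdh⟩ := key d hd
      exact (mem_UextE_gMap S tq x f hf _ _ _).2 ⟨hi, h, hh, hr i, hdh⟩
    · intro d hd
      obtain ⟨h, hh, -, rfl⟩ := key d hd
      exact pullE_isHom S tq x f hf h hh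
end

section
/- In the setting of the template with P = Š_1 and the construction Ω described in the context: let t ∈ 𝒯, let h : T(t) → Ω(B) be a homomorphism, and let d : Š^{T(t)} → B be a map such that for every Š-edge s ∈ Š^{T(t)}, d(s) is a witness for the edge h^{Š}(s) ∈ Š^{Ω(B)}. Then d is a homomorphism Γ(T(t)) → B. -/
variable {σ τ υ : Signature}

theorem VTerm.esub_of_pr_mem_vsub {S : σ.symb} {i : Fin (σ.ar S)} {ts : Fin (σ.ar S) → VTerm σ}
    (t : VTerm σ) (ht : VTerm.pr S i ts ∈ t.vsub) : ts ∈ t.esub S := by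
  induction t with
  | vertex => cases ht
  | pr R k us ih =>
    rcases ht with ht | ht
    · cases ht
      exact Or.inl ⟨rfl, rfl⟩
    · obtain ⟨j, hj⟩ := Set.mem_iUnion.1 ht
      exact Or.inr ⟨j, ih j hj⟩

theorem VTerm.vsub_of_mem_esub {S : σ.symb} {ts : Fin (σ.ar S) → VTerm σ}
    (t : VTerm σ) (ht : ts ∈ t.esub S) (i : Fin (σ.ar S)) : ts i ∈ t.vsub := by
  induction t with
  | vertex => cases ht
  | pr R k us ih =>
    refine Or.inr (Set.mem_iUnion.2 ?_)
    rcases ht with ⟨rfl, rfl⟩ | ⟨j, hj⟩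
    · exact ⟨_, VTerm.self_mem_vsub _⟩
    · exact ⟨j, ih j hj⟩

theorem TEs_of_pr_mem_TVs {tq : τ.symb → Term σ} {S : σ.symb} {i : Fin (σ.ar S)}
    {ts : Fin (σ.ar S) → VTerm σ} (ht : VTerm.pr S i ts ∈ TVs tq) : ts ∈ TEs tq S := by
  obtain ⟨R, hR⟩ := Set.mem_iUnion.1 ht
  refine Set.mem_iUnion.2 ⟨R, ?_⟩
  generalize tq R = q at hR
  rcases q with t | ⟨S', us⟩
  · exact VTerm.esub_of_pr_mem_vsub t hR
  · obtain ⟨j, hj⟩ := Set.mem_iUnion.1 hR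
    exact Or.inr ⟨j, VTerm.esub_of_pr_mem_vsub _ hj⟩

theorem TVs_of_mem_TEs {tq : τ.symb → Term σ} {S : σ.symb}
    {ts : Fin (σ.ar S) → VTerm σ} (ht : ts ∈ TEs tq S) (i : Fin (σ.ar S)) : ts i ∈ TVs tq := by
  obtain ⟨R, hR⟩ := Set.mem_iUnion.1 ht
  refine Set.mem_iUnion.2 ⟨R, ?_⟩
  generalize tq R = q at hR
  rcases q with t | ⟨S', us⟩
  · exact VTerm.vsub_of_mem_esub t hR i
  · refine Set.mem_iUnion.2 ?_
    rcases hR with ⟨rfl, rfl⟩ | ⟨j, hj⟩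
    · exact ⟨_, VTerm.self_mem_vsub _⟩
    · exact ⟨j, VTerm.vsub_of_mem_esub _ hj i⟩

theorem UextE_of_mem (Sc : σ.symb) (tq : τ.symb → Term σ)
    (x : ∀ R : τ.symb, Fin (τ.ar R) → (Fin (σ.ar Sc) → ((tq R).tree).dom))
    (B : Struct τ) (U : OmEDom Sc tq x B) {t : VTerm σ} (ht : t ∈ TVs tq) :
    UextE Sc tq x B U t = U.1 ⟨t, ht⟩ :=
  dif_pos ht

/-- The step at the root edge of `T(edge_S(ts))`: if all restrictions of `d` to the subtrees lie
in the entries of the images of the subtree roots, then `d` lies in the product `⨉` at the root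
edge, so (A1), (A2) (or (B1), (B2) with witness `d(r_t)`) apply to it. -/
theorem omegaE_root_step (Sc : σ.symb) (tq : τ.symb → Term σ)
    (x : ∀ R : τ.symb, Fin (τ.ar R) → (Fin (σ.ar Sc) → ((tq R).tree).dom))
    (B : Struct τ) (S : σ.symb) (ts : Fin (σ.ar S) → VTerm σ) (hts : ts ∈ TEs tq S)
    (h : (ETerm.tree S ts).dom → (OmegaE Sc tq x B).dom)
    (hh : IsHom (ETerm.tree S ts) (OmegaE Sc tq x B) h)
    (d : (GammaE Sc tq x (ETerm.tree S ts)).dom → B.dom)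
    (hd : ∀ s : (GammaE Sc tq x (ETerm.tree S ts)).dom,
      IsWitness Sc tq x B (fun i => h (s.1 i)) (d s))
    (hr : ∀ i, restrE Sc tq x B S ts i d ∈ UextE Sc tq x B (h (edgeRoot S ts i)) (ts i)) :
    (∀ i, VTerm.pr S i ts ∈ TVs tq →
      d ∈ UextE Sc tq x B (h (edgeRoot S ts i)) (.pr S i ts)) ∧
    IsHom (GammaE Sc tq x (ETerm.tree S ts)) B d := by
  by_cases hS : S = Sc
  · subst hS
    have hw := hd ⟨edgeRoot S ts, rootEdgeMem S ts⟩ ts hts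
    exact ⟨fun i hi => hw.1 i hi d ⟨hr, rfl⟩, hw.2 d ⟨hr, rfl⟩⟩
  · have hA := (hh S _ (rootEdgeMem S ts)).1 hS
    exact ⟨fun i hi => hA.1 ts hts i hi d hr, hA.2 ts hts d hr⟩

/-- The strengthening of the claim that the induction on V-terms proves: `d` is a member of the
entry at `t` of the image of the root of `T(t)`. -/
theorem omegaE_mem_entry (Sc : σ.symb) (tq : τ.symb → Term σ)
    (x : ∀ R : τ.symb, Fin (τ.ar R) → (Fin (σ.ar Sc) → ((tq R).tree).dom))
    (B : Struct τ) (t : VTerm σ) (ht : t ∈ TVs tq)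
    (h : (t.tree).dom → (OmegaE Sc tq x B).dom) (hh : IsHom t.tree (OmegaE Sc tq x B) h)
    (d : (GammaE Sc tq x t.tree).dom → B.dom)
    (hd : ∀ s : (GammaE Sc tq x t.tree).dom,
      IsWitness Sc tq x B (fun i => h (s.1 i)) (d s)) :
    d ∈ UextE Sc tq x B (h t.root) t := by
  induction t with
  | vertex =>
    have hU := (UextE_of_mem Sc tq x B (h (VTerm.vertex (σ := σ)).root) ht).trans
      ((h (VTerm.vertex (σ := σ)).root).2.2 ht)
    exact hU.symm.subset (Set.mem_univ d)
  | pr S i ts ih =>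
    have hts := TEs_of_pr_mem_TVs ht
    refine (omegaE_root_step Sc tq x B S ts hts h hh d hd fun j => ?_).1 i ht
    exact ih j (TVs_of_mem_TEs hts j) (fun v => h ⟨j, v⟩)
      (fun R y hy => hh R (fun k => ⟨j, y k⟩) (Or.inl ⟨j, y, hy, rfl⟩))
      (restrE Sc tq x B S ts j d)
      (fun s => hd ⟨fun k => ⟨j, s.1 k⟩, Or.inl ⟨j, s.1, s.2, rfl⟩⟩)

/-- for `t ∈ 𝒯`, a homomorphism `h : T(t) → Ω(B)`, and a map
`d : Š^{T(t)} → B` such that `d(s)` is a witness for the edge `h^{Š}(s)` for every `Š`-edge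
`s` of `T(t)`, the map `d` is a homomorphism `Γ(T(t)) → B`.  (Stated for V-terms and for
R-terms in `𝒯`.) -/
theorem omegaE_tree_lemma {σ τ : Signature} (Sc : σ.symb) (tq : τ.symb → Term σ)
    (x : ∀ R : τ.symb, Fin (τ.ar R) → (Fin (σ.ar Sc) → ((tq R).tree).dom))
    (hx : ∀ R i, x R i ∈ ((tq R).tree).rel Sc) (B : Struct τ) :
    (∀ t : VTerm σ, t ∈ TVs tq →
      ∀ h : (t.tree).dom → (OmegaE Sc tq x B).dom, IsHom t.tree (OmegaE Sc tq x B) h →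
      ∀ d : (GammaE Sc tq x t.tree).dom → B.dom,
        (∀ s : (GammaE Sc tq x t.tree).dom,
            IsWitness Sc tq x B (fun i => h (s.1 i)) (d s)) →
        IsHom (GammaE Sc tq x t.tree) B d) ∧
    (∀ (S : σ.symb) (ts : Fin (σ.ar S) → VTerm σ), ts ∈ TEs tq S →
      ∀ h : (ETerm.tree S ts).dom → (OmegaE Sc tq x B).dom,
        IsHom (ETerm.tree S ts) (OmegaE Sc tq x B) h →
      ∀ d : (GammaE Sc tq x (ETerm.tree S ts)).dom → B.dom,
        (∀ s : (GammaE Sc tq x (ETerm.tree S ts)).dom,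
            IsWitness Sc tq x B (fun i => h (s.1 i)) (d s)) →
        IsHom (GammaE Sc tq x (ETerm.tree S ts)) B d) := by
  refine ⟨fun t ht h hh d hd => ?_, fun S ts hts h hh d hd => ?_⟩
  · have hmem := omegaE_mem_entry Sc tq x B t ht h hh d hd
    exact (h t.root).2.1 ⟨t, ht⟩ d ((UextE_of_mem Sc tq x B (h t.root) ht).subset hmem)
  · refine (omegaE_root_step Sc tq x B S ts hts h hh d hd fun j => ?_).2
    exact omegaE_mem_entry Sc tq x B (ts j) (TVs_of_mem_TEs hts j) (fun v => h ⟨j, v⟩)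
      (fun R y hy => hh R (fun k => ⟨j, y k⟩) (Or.inl ⟨j, y, hy, rfl⟩))
      (restrE Sc tq x B S ts j d)
      (fun s => hd ⟨fun k => ⟨j, s.1 k⟩, Or.inl ⟨j, s.1, s.2, rfl⟩⟩)
end

section
/- Let τ contain a single relational symbol R, and fix a (σ,τ)-Pultr template with P = V_1 (the one-vertex σ-structure with empty relations) and Q_R = T(t_R) for an S-term t_R (S a σ-symbol) such that Q_R does not homomorphically map to T(t) for any proper subterm t of t_R. Let Ω be the construction described in the context, defined using the term t_R. Then Ω(V_1^τ), the image under Ω of the τ-structure with one element and empty relation R, is isomorphic to the structure D(t_R). -/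
variable {σ τ υ : Signature}

/-- The equivalence `f` is an isomorphism of `σ`-structures from `A` to `B`. -/
def IsIso (A B : Struct σ) (f : A.dom ≃ B.dom) : Prop :=
  ∀ R : σ.symb, ∀ x : Fin (σ.ar R) → A.dom, x ∈ A.rel R ↔ (fun i => f (x i)) ∈ B.rel R

/-- The `τ`-structure with a single element and all relations empty. -/
def VOne (τ : Signature) : Struct τ := ⟨PUnit, fun _ => ∅⟩

theorem mem_TVs_iff (R0 : τ.symb) (T : Term σ) (t : VTerm σ) :
    t ∈ TVs (fun _ : τ.symb => T) ↔ t ∈ T.vsub := by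
  simp only [TVs, Set.mem_iUnion]
  exact ⟨fun ⟨_, h⟩ => h, fun h => ⟨R0, h⟩⟩

theorem mem_TEs_iff (R0 : τ.symb) (T : Term σ) (S : σ.symb) (us : Fin (σ.ar S) → VTerm σ) :
    us ∈ TEs (fun _ : τ.symb => T) S ↔ us ∈ T.esub S := by
  simp only [TEs, Set.mem_iUnion]
  exact ⟨fun ⟨_, h⟩ => h, fun h => ⟨R0, h⟩⟩

/-- The map `Γ(A) → V₁` is a homomorphism iff `Γ(A)` has no edges, i.e. iff `Q_R ↛ A`. -/
theorem isHom_gammaV_VOne (R0 : τ.symb) (T : Term σ) (x : ∀ R : τ.symb, Fin (τ.ar R) → T.tree.dom)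
    (A : Struct σ) (f : A.dom → (VOne τ).dom) :
    IsHom (GammaV (fun _ : τ.symb => T) x A) (VOne τ) f ↔ ¬ HomEx T.tree A := by
  constructor
  · rintro h ⟨r, hr⟩
    exact h R0 (fun i => r (x R0 i)) ⟨r, hr, fun _ => rfl⟩
  · rintro h R y ⟨r, hr, -⟩
    exact (h ⟨r, hr⟩).elim

open Classical in
/-- The bijection between `Ω(V₁)` and the Boolean tuples indexed by the V-subterms of `T`: the
Boolean at `t` records whether the (unique) map `T(t) → V₁` belongs to `U_t`. -/
noncomputable def omegaDualEquiv (R0 : τ.symb) (T : Term σ)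
    (x : ∀ R : τ.symb, Fin (τ.ar R) → T.tree.dom)
    (hmin : ∀ t ∈ T.vsub, ¬ HomEx T.tree t.tree) :
    OmVDom (fun _ : τ.symb => T) x (VOne τ) ≃ BDom T.vsub where
  toFun U := ⟨fun t => decide ((fun _ => PUnit.unit) ∈ U.1 ⟨t.1, (mem_TVs_iff R0 T t.1).2 t.2⟩), by
    intro h
    obtain ⟨f, hf, -⟩ := U.2.2 ((mem_TVs_iff R0 T _).2 h)
    exact decide_eq_true hf⟩
  invFun v := ⟨fun t => {_f | v.1 ⟨t.1, (mem_TVs_iff R0 T t.1).1 t.2⟩ = true}, by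
    intro t f _
    exact (isHom_gammaV_VOne R0 T x _ f).2 (hmin _ ((mem_TVs_iff R0 T _).1 t.2)), by
    intro h
    exact ⟨fun _ => PUnit.unit, v.2 _, fun _ _ => rfl⟩⟩
  left_inv U := by
    apply Subtype.ext
    funext t
    ext f
    exact decide_eq_true_iff
  right_inv v := by
    apply Subtype.ext
    funext t
    exact Bool.decide_eq_true

theorem mem_UextV_iff (R0 : τ.symb) (T : Term σ)
    (x : ∀ R : τ.symb, Fin (τ.ar R) → T.tree.dom)
    (hmin : ∀ t ∈ T.vsub, ¬ HomEx T.tree t.tree)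
    (U : OmVDom (fun _ : τ.symb => T) x (VOne τ)) (t : VTerm σ) (f : t.tree.dom → (VOne τ).dom) :
    f ∈ UextV (fun _ : τ.symb => T) x (VOne τ) U t ↔
      bext T.vsub (omegaDualEquiv R0 T x hmin U) t = true := by
  unfold UextV bext
  by_cases h : t ∈ T.vsub
  · rw [dif_pos h, dif_pos ((mem_TVs_iff R0 T t).2 h)]
    exact (@decide_eq_true_iff _ (Classical.propDecidable _)).symm
  · rw [dif_neg h, dif_neg (mt (mem_TVs_iff R0 T t).1 h)]
    simp

theorem mem_timesV_iff (R0 : τ.symb) (T : Term σ)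
    (x : ∀ R : τ.symb, Fin (τ.ar R) → T.tree.dom)
    (hmin : ∀ t ∈ T.vsub, ¬ HomEx T.tree t.tree) (R : σ.symb) (us : Fin (σ.ar R) → VTerm σ)
    (Us : Fin (σ.ar R) → OmVDom (fun _ : τ.symb => T) x (VOne τ))
    (g : edgeDom R us → (VOne τ).dom) :
    g ∈ timesV (fun _ : τ.symb => T) x (VOne τ) R us Us ↔
      andT T.vsub us (fun j => omegaDualEquiv R0 T x hmin (Us j)) :=
  forall_congr' fun _ => mem_UextV_iff R0 T x hmin _ _ _

/-- let `τ` have a single symbol `R₀`, let the template have `P = V₁` and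
`Q_{R₀} = T(t_R)` for an S-term `t_R = edge_S(tsR)` which is minimal in the sense that
`Q_{R₀}` does not map homomorphically to `T(t)` for any proper subterm `t` of `t_R`.  Then
`Ω(V₁)` is isomorphic to `D(t_R)`. -/
theorem omegaV_of_point_iso_dual {σ τ : Signature} (R0 : τ.symb) (huniq : ∀ R : τ.symb, R = R0)
    (S : σ.symb) (tsR : Fin (σ.ar S) → VTerm σ)
    (tq : τ.symb → Term σ) (htq : tq R0 = Sum.inr ⟨S, tsR⟩)
    (x : ∀ R : τ.symb, Fin (τ.ar R) → ((tq R).tree).dom)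
    (hminV : ∀ t ∈ Term.vsub (σ := σ) (.inr ⟨S, tsR⟩),
        ¬ HomEx (ETerm.tree S tsR) (VTerm.tree t))
    (hminE : ∀ S' : σ.symb, ∀ us ∈ Term.esub (σ := σ) (.inr ⟨S, tsR⟩) S',
        (Sum.inr ⟨S', us⟩ : Term σ) ≠ Sum.inr ⟨S, tsR⟩ →
        ¬ HomEx (ETerm.tree S tsR) (ETerm.tree S' us)) :
    ∃ f : (OmegaV tq x (VOne τ)).dom ≃ (Dual S tsR).dom,
      IsIso (OmegaV tq x (VOne τ)) (Dual S tsR) f := by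
  obtain rfl : tq = fun _ => Sum.inr ⟨S, tsR⟩ := by
    funext R
    rw [huniq R, htq]
  refine ⟨omegaDualEquiv R0 (Sum.inr ⟨S, tsR⟩) x hminV, fun R Us => ?_⟩
  refine and_congr ?_ ?_
  · constructor
    · intro h us hus i hi hand
      refine (mem_UextV_iff R0 _ x hminV _ _ (fun _ => PUnit.unit)).1
        (h us ((mem_TEs_iff R0 _ _ _).2 hus) i ((mem_TVs_iff R0 _ _).2 hi) _ ?_)
      exact (mem_timesV_iff R0 _ x hminV _ _ _ _).2 hand
    · intro h us hus i hi g hg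
      exact (mem_UextV_iff R0 _ x hminV _ _ _).2
        (h us ((mem_TEs_iff R0 _ _ _).1 hus) i ((mem_TVs_iff R0 _ _).1 hi)
          ((mem_timesV_iff R0 _ x hminV _ _ _ _).1 hg))
  · constructor
    · rintro h rfl hand
      -- The identity of `Q_R` witnesses that `Γ(Q_R)` has an edge.
      refine (isHom_gammaV_VOne R0 _ x _ _).1 (h tsR ((mem_TEs_iff R0 _ _ _).2 (Or.inl ⟨rfl, rfl⟩))
        (fun _ => PUnit.unit) ((mem_timesV_iff R0 _ x hminV _ _ _ _).2 hand)) ⟨id, fun _ _ hy => hy⟩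
    · intro h us hus g hg
      refine (isHom_gammaV_VOne R0 _ x _ _).2
        (hminE R us ((mem_TEs_iff R0 _ _ _).1 hus) fun heq => ?_)
      have heq' := Sum.inr.inj heq
      obtain rfl : R = S := congrArg Sigma.fst heq'
      obtain rfl : us = tsR := eq_of_heq (Sigma.mk.inj heq').2
      exact h rfl ((mem_timesV_iff R0 _ x hminV _ _ _ _).1 hg)
end

section
/- Fix an integer k ≥ 1. Let D_k be the digraph whose vertices are the tuples u = (u_1,…,u_k) ∈ {true,false}^k with u_1 = true, and with (u, v) an edge if and only if u_k = false and, for every 1 ≤ i ≤ k−1, u_i implies v_{i+1}. Let L_k be the digraph with vertex set {1,…,k} and edge relation <. Then D_k and L_k are homomorphically equivalent; explicitly, the map sending i ∈ {1,…,k} to the tuple whose first i entries are true and whose remaining entries are false is a homomorphism L_k → D_k, and the map sending a tuple u whose entries begin with exactly i trues followed by a false (and sending the all-true tuple to k) to i is a homomorphism D_k → L_k. -/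
/-!
The key quantity is the length of the initial run of `true`s of a vertex of `D_k`; it lies in
`{1, …, k}` (`exists_run`). Along an edge `(u, v)` the entries of `u` are shifted
by one into `v`, and `v` begins with `true`, so a run of length `i` in `u` forces a run of length
at least `i + 1` in `v`; here `i < k` because the last entry of `u` is `false`. Hence run length
is a homomorphism `D_k → L_k`. Conversely the tuple with `m` leading `true`s shifts into any tuple
with more than `m` leading `true`s, which gives `L_k → D_k`.
-/

/-- `f` is a homomorphism from the digraph `(V, E)` to the digraph `(W, F)`. -/
def DigraphHom {V W : Type} (E : V → V → Prop) (F : W → W → Prop) (f : V → W) : Prop :=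
  ∀ u v, E u v → F (f u) (f v)

/-- Vertices of `D_k`: tuples `u ∈ {true, false}^k` (0-indexed, so `u 0` is the paper's
`u_1`) with first entry `true`. -/
def DkVert (k : ℕ) (hk : 0 < k) : Type :=
  {u : Fin k → Bool // u ⟨0, hk⟩ = true}

/-- Edges of `D_k`: `(u, v)` is an edge iff the last entry of `u` is `false` and, for every
`i` with `i + 1 < k`, `u_i` implies `v_{i+1}`. -/
def DkAdj (k : ℕ) (hk : 0 < k) (u v : DkVert k hk) : Prop :=
  u.1 ⟨k - 1, by omega⟩ = false ∧
  ∀ (i : ℕ) (h : i + 1 < k), u.1 ⟨i, by omega⟩ = true → v.1 ⟨i + 1, h⟩ = true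

/-- Edges of `L_k`: the strict order on its `k` vertices. -/
def LkAdj (k : ℕ) (i j : Fin k) : Prop := (i : ℕ) < (j : ℕ)

/-- Every vertex of `D_k` has an initial run of `true`s of some length `i` with `1 ≤ i ≤ k`. -/
theorem exists_run (k : ℕ) (hk : 0 < k) (u : DkVert k hk) :
    ∃ i : ℕ, 1 ≤ i ∧ i ≤ k ∧ (∀ j : Fin k, (j : ℕ) < i → u.1 j = true) ∧
      (∀ hi : i < k, u.1 ⟨i, hi⟩ = false) := by
  classical
  -- The run length is the first index at which `u` is `false` or undefined.
  have hex : ∃ i : ℕ, ∀ hi : i < k, u.1 ⟨i, hi⟩ = false :=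
    ⟨k, fun hi => absurd hi (lt_irrefl k)⟩
  refine ⟨Nat.find hex, ?_, ?_, ?_, Nat.find_spec hex⟩
  · rw [Nat.one_le_iff_ne_zero]
    intro h0
    have h := Nat.find_spec hex
    simp only [h0] at h
    exact Bool.false_ne_true ((h hk).symm.trans u.2)
  · exact Nat.find_min' hex fun hi => absurd hi (lt_irrefl k)
  · intro j hj
    by_contra hne
    exact Nat.find_min hex hj fun _ => by simpa using hne

/-- `D_k` and `L_k` are homomorphically equivalent; explicitly, the map sending
the `m`-th vertex of `L_k` (`m = i + 1` in 1-based counting) to the tuple whose first `m`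
entries are `true` and whose remaining entries are `false` is a homomorphism `L_k → D_k`, and
the map sending a tuple beginning with exactly `i` `true`s followed by a `false` to the `i`-th
vertex of `L_k` (and the all-`true` tuple to the `k`-th vertex) is a homomorphism
`D_k → L_k`. -/
theorem dk_hom_equiv_lk (k : ℕ) (hk : 0 < k) :
    DigraphHom (LkAdj k) (DkAdj k hk)
      (fun i => ⟨fun j => decide ((j : ℕ) ≤ (i : ℕ)), by simp⟩) ∧
    (∃ f : DkVert k hk → Fin k,
      (∀ (u : DkVert k hk) (i : ℕ) (hik : i ≤ k),
        (∀ j : Fin k, (j : ℕ) < i → u.1 j = true) →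
        (∀ hi : i < k, u.1 ⟨i, hi⟩ = false) →
        ∀ h1 : 1 ≤ i, f u = ⟨i - 1, by omega⟩) ∧
      DigraphHom (DkAdj k hk) (LkAdj k) f) ∧
    (∃ f, DigraphHom (DkAdj k hk) (LkAdj k) f) ∧
    (∃ g, DigraphHom (LkAdj k) (DkAdj k hk) g) := by
  have hg : DigraphHom (LkAdj k) (DkAdj k hk)
      (fun i => ⟨fun j => decide ((j : ℕ) ≤ (i : ℕ)), by simp⟩) := by
    intro i j hij
    have hij' : (i : ℕ) < (j : ℕ) := hij
    have hj := j.2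
    refine ⟨decide_eq_false ?_, fun a _ ha => decide_eq_true ?_⟩
    · show ¬ (k - 1 ≤ (i : ℕ))
      omega
    · have ha' : a ≤ (i : ℕ) := of_decide_eq_true ha
      show a + 1 ≤ (j : ℕ)
      omega
  choose r hr1 hrk hrt hrf using exists_run k hk
  have hf : DigraphHom (DkAdj k hk) (LkAdj k)
      (fun u => ⟨r u - 1, by have := hr1 u; have := hrk u; omega⟩) := by
    intro u v huv
    obtain ⟨hlast, hstep⟩ := huv
    have hu := hr1 u
    have hv := hr1 v
    have hlt : r u < r v := by
      by_contra hle
      -- Otherwise the `false` ending the run of `v` sits at index `r v ≤ r u`, whereas the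
      -- entry of `u` just before that index is `true`.
      have hku : r u < k := by
        by_contra hk'
        have h := hrt u ⟨k - 1, by omega⟩ (show k - 1 < r u by omega)
        rw [hlast] at h
        exact Bool.false_ne_true h
      have hvf := hrf v (by omega)
      have hvt := hstep (r v - 1) (by omega)
        (hrt u ⟨r v - 1, by omega⟩ (show r v - 1 < r u by omega))
      simp only [Nat.sub_add_cancel hv] at hvt
      rw [hvf] at hvt
      exact Bool.false_ne_true hvt
    show r u - 1 < r v - 1
    omega
  refine ⟨hg, ⟨_, ?_, hf⟩, ⟨_, hf⟩, ⟨_, hg⟩⟩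
  intro u i hik ht hfalse h1
  -- Two initial runs of the same tuple have the same length.
  have hri : r u = i := by
    have hk' := hrk u
    rcases lt_trichotomy (r u) i with h | h | h
    · have h2 := hrf u (by omega)
      rw [ht ⟨r u, by omega⟩ h] at h2
      exact absurd h2.symm Bool.false_ne_true
    · exact h
    · have h2 := hfalse (by omega)
      rw [hrt u ⟨i, by omega⟩ h] at h2
      exact absurd h2.symm Bool.false_ne_true
  exact Fin.ext (by simp [hri])
end
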